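/- arXiv:2208.04175 — 2 statements merged into one kernel-verified Lean document; each statement's English description precedes it below -/
import Mathlib

section
/- In the path algebra 𝒫, for every integer i ≥ 1 the following two identities hold: 𝗇^i𝖾 = [i]_q·(𝗇𝖾)·𝗇^{i−1} − q·[i−1]_q·(𝖾𝗇)·𝗇^{i−1}, and 𝗇𝖾^i = [i]_q·𝖾^{i−1}·(𝗇𝖾) − q·[i−1]_q·𝖾^{i−1}·(𝖾𝗇). -/
noncomputable section

/-- The base field `F = ℂ(q)`. -/
abbrev F : Type := RatFunc ℂ

/-- The indeterminate `q`. -/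
def qq : F := RatFunc.X

/-- The `q`-integer `[j]_q = 1 + q + ⋯ + q^(j-1)`. -/
def qint (j : ℕ) : F := ∑ i ∈ Finset.range j, qq ^ i

/-- The `q`-factorial `[j]_q! = [1]_q ⋯ [j]_q`. -/
def qfact (j : ℕ) : F := ∏ i ∈ Finset.range j, qint (i + 1)

/-- Modular relations defining the path algebra `𝒫`; the letter `true` is `𝗇`,
the letter `false` is `𝖾`. -/
inductive PathRel : FreeAlgebra F Bool → FreeAlgebra F Bool → Prop where
  | mod1 : PathRel
      ((1 + qq) • (FreeAlgebra.ι F false * FreeAlgebra.ι F true * FreeAlgebra.ι F false))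
      (qq • (FreeAlgebra.ι F false * FreeAlgebra.ι F false * FreeAlgebra.ι F true) +
        FreeAlgebra.ι F true * FreeAlgebra.ι F false * FreeAlgebra.ι F false)
  | mod2 : PathRel
      ((1 + qq) • (FreeAlgebra.ι F true * FreeAlgebra.ι F false * FreeAlgebra.ι F true))
      (qq • (FreeAlgebra.ι F false * FreeAlgebra.ι F true * FreeAlgebra.ι F true) +
        FreeAlgebra.ι F true * FreeAlgebra.ι F true * FreeAlgebra.ι F false)

/-- The path algebra `𝒫`. -/
abbrev PathAlg : Type := RingQuot PathRel

/-- The generator `𝗇` of `𝒫`. -/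
def Pn : PathAlg := RingQuot.mkAlgHom F PathRel (FreeAlgebra.ι F true)

/-- The generator `𝖾` of `𝒫`. -/
def Pe : PathAlg := RingQuot.mkAlgHom F PathRel (FreeAlgebra.ι F false)

/-- The element of `𝒫` determined by a word in `𝗇` (`true`) and `𝖾` (`false`). -/
def wordElem (w : List Bool) : PathAlg := (w.map fun b => if b then Pn else Pe).prod

/-- `𝒫_{m,n}`: the span of words with `m` letters `𝗇` and `n` letters `𝖾`. -/
def Pmn (m n : ℕ) : Submodule F PathAlg :=
  Submodule.span F {x | ∃ w : List Bool, w.count true = m ∧ w.count false = n ∧ x = wordElem w}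

/-- `lam` (0-indexed list of parts) is a partition contained in the `m × n` box. -/
def IsPartitionIn (m n : ℕ) (lam : ℕ → ℕ) : Prop :=
  (∀ i j, i ≤ j → lam j ≤ lam i) ∧ (∀ i, lam i ≤ n) ∧ (∀ i, m ≤ i → lam i = 0)

/-- `eastBefore w r` = number of east steps (`false`) preceding the `(r+1)`-st
north step (`true`) of `w`. -/
def eastBefore : List Bool → ℕ → ℕ
  | [], _ => 0
  | true :: _, 0 => 0
  | true :: w, r + 1 => eastBefore w r
  | false :: w, r => eastBefore w r + 1

/-- `northBefore w r` = number of north steps (`true`) preceding the `(r+1)`-st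
east step (`false`) of `w`. -/
def northBefore : List Bool → ℕ → ℕ
  | [], _ => 0
  | false :: _, 0 => 0
  | false :: w, r + 1 => northBefore w r
  | true :: w, r => northBefore w r + 1

/-- The partition `λ(w)` of a word with `m` letters `𝗇`, as a 0-indexed function:
row `i` (from the top) of the partition has `eastBefore w (m-1-i)` cells. -/
def wordLam (m : ℕ) (w : List Bool) : ℕ → ℕ :=
  fun i => if i < m then eastBefore w (m - 1 - i) else 0

/-- The word `w(λ)` of a partition `λ ⊆ m × n` (given as 0-indexed `lam : ℕ → ℕ`). -/
def wordOf (m n : ℕ) (lam : ℕ → ℕ) : List Bool :=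
  ((List.range m).flatMap fun k =>
    List.replicate (lam (m - 1 - k) - lam (m - k)) false ++ [true]) ++
    List.replicate (n - lam 0) false

/-- The rook in column `j` of the placement `ρ` lies inside the Ferrers board of `lam`. -/
def rookInside (m n : ℕ) (lam : ℕ → ℕ) (ρ : Fin n ↪ Fin m) (j : Fin n) : Prop :=
  (j : ℕ) < lam (ρ j)

/-- The cell in row `i` (0-indexed from the top) and column `j` (0-indexed from the left)
is unattacked for the maximal non-attacking rook placement `ρ` (with the Ferrers board of
`lam` drawn in the top-left corner of the `m × n` board). -/
def Unattacked (m n : ℕ) (lam : ℕ → ℕ) (ρ : Fin n ↪ Fin m) (i : Fin m) (j : Fin n) : Prop :=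
  ρ j ≠ i ∧ ¬ ((ρ j : ℕ) < (i : ℕ)) ∧
    (if (j : ℕ) < lam i then
      (∀ j' : Fin n, ρ j' = i → ¬ (j' < j)) ∧
      (∀ j' : Fin n, ρ j' = i → j < j' → (j' : ℕ) < lam i)
    else
      ∀ j' : Fin n, ρ j' = i → j' < j → (j' : ℕ) < lam i)

/-- `stat ρ` = number of unattacked cells. -/
def statRook (m n : ℕ) (lam : ℕ → ℕ) (ρ : Fin n ↪ Fin m) : ℕ :=
  Set.ncard {p : Fin m × Fin n | Unattacked m n lam ρ p.1 p.2}

/-- The `q`-hit number `H_k^{m,n}(λ)`. -/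
def qHit (m n : ℕ) (lam : ℕ → ℕ) (k : ℕ) : F :=
  ∑ ρ : Fin n ↪ Fin m,
    if Set.ncard {j : Fin n | rookInside m n lam ρ j} = k then qq ^ statRook m n lam ρ else 0

/-- A Dyck word of size `N`. -/
def IsDyck (N : ℕ) (w : List Bool) : Prop :=
  w.count true = N ∧ w.count false = N ∧
    ∀ p : ℕ, (w.take p).count false ≤ (w.take p).count true

/-- Adjacency of the Dyck graph `G(D)` of a Dyck word of size `N` on vertices `Fin N`
(0-indexed: vertex `a` is the vertex `a+1` of `{1,…,N}`). -/
def dyckAdj (N : ℕ) (w : List Bool) (a b : Fin N) : Prop :=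
  ((a : ℕ) < b ∧ (b : ℕ) < northBefore w a) ∨ ((b : ℕ) < a ∧ (a : ℕ) < northBefore w b)

/-- Proper colorings of the Dyck graph `G(w)` with `ν` colors. -/
def properColorings (N ν : ℕ) (w : List Bool) : Set (Fin N → Fin ν) :=
  {κ | ∀ a b : Fin N, dyckAdj N w a b → κ a ≠ κ b}

/-- Number of ascents of a coloring. -/
def ascColor (N ν : ℕ) (w : List Bool) (κ : Fin N → Fin ν) : ℕ :=
  Set.ncard {p : Fin N × Fin N | (p.1 : ℕ) < p.2 ∧ dyckAdj N w p.1 p.2 ∧ κ p.1 < κ p.2}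

open scoped Classical in
/-- The chromatic quasisymmetric polynomial `X_{G(w)}(x_1,…,x_ν; q)`. -/
def chromX (N ν : ℕ) (w : List Bool) : MvPolynomial (Fin ν) F :=
  ∑ κ : Fin N → Fin ν,
    if κ ∈ properColorings N ν w then
      MvPolynomial.C (qq ^ ascColor N ν w κ) * ∏ a : Fin N, MvPolynomial.X (κ a)
    else 0

/-- The staircase word `δ_k = 𝖾^{n-k}(𝗇𝖾)^k𝗇^{m-k}`. -/
def deltaWord (m n k : ℕ) : List Bool :=
  List.replicate (n - k) false ++ (List.replicate k [true, false]).flatten ++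
    List.replicate (m - k) true

/-- `m_w`: the largest `k` with `λ(w) ⊆ λ(δ_k)`, i.e. such that the path of `δ_k`
lies weakly below the path of `w`. -/
def mw (m n : ℕ) (w : List Bool) : ℕ :=
  Finset.sup ((Finset.range (min m n + 1)).filter fun k =>
    ∀ i ∈ Finset.range m, wordLam m w i ≤ wordLam m (deltaWord m n k) i) id

/-- The lattice paths of `w` and `d` share the unit step of `w` corresponding to
the letter at (0-indexed) position `p` of `w`. -/
def StepShared (w d : List Bool) (p : ℕ) : Prop :=
  ∃ p' : ℕ, p' < d.length ∧ d[p']? = w[p]? ∧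
    (d.take p').count true = (w.take p).count true ∧
    (d.take p').count false = (w.take p).count false

/-- `w` possesses a critical factor: a factor `𝗇^i𝖾` or `𝗇𝖾^i` with `i ≥ 2`, whose run of
repeated letters is maximal within `w`, and whose letters contain a unit step shared by
the lattice paths of `w` and of `δ_{m_w}`. -/
def HasCriticalFactor (m n : ℕ) (w : List Bool) : Prop :=
  ∃ (x y : List Bool) (i : ℕ), 2 ≤ i ∧
    ((w = x ++ (List.replicate i true ++ [false]) ++ y ∧ x.getLast? ≠ some true ∧
        ∃ p, x.length ≤ p ∧ p < x.length + i + 1 ∧ StepShared w (deltaWord m n (mw m n w)) p) ∨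
      (w = x ++ ([true] ++ List.replicate i false) ++ y ∧ y.head? ≠ some false ∧
        ∃ p, x.length ≤ p ∧ p < x.length + i + 1 ∧ StepShared w (deltaWord m n (mw m n w)) p))

/-- Evaluation of a (commutative) polynomial in two variables at the commuting elements
`s`, `t` of `𝒫`. -/
def evalST (s t : PathAlg) (P : MvPolynomial (Fin 2) F) : PathAlg :=
  ∑ d ∈ P.support, P.coeff d • (s ^ (d 0) * t ^ (d 1))

/-- The conjugate partition: `conjP m lam i = λ'_i = #{rows r : λ_r ≥ i}` (here `i ≥ 1`,
rows 0-indexed, `lam` supported on `[0, m)`). -/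
def conjP (m : ℕ) (lam : ℕ → ℕ) (i : ℕ) : ℕ :=
  ((Finset.range m).filter fun r => i ≤ lam r).card

/-- The sequence `b(λ) = (b_1,…,b_n)` (1-indexed `i`) for `λ ⊆ m × n`, `m ≥ n`. -/
def bSeq (m : ℕ) (lam : ℕ → ℕ) (i : ℕ) : ℤ :=
  if lam (m - i) < i then (m : ℤ) + 1 - i - conjP m lam i else (i : ℤ) - lam (m - i)

/-- The element `wt_i ∈ 𝒫`. -/
def wt (i : ℤ) : PathAlg :=
  if 1 ≤ i then qint i.toNat • (Pn * Pe) - (qq * qint (i - 1).toNat) • (Pe * Pn)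
  else (qq ^ i) • (qint (1 - i).toNat • (Pe * Pn) - qint (-i).toNat • (Pn * Pe))

/-- The defining relations of the `q`-Klyachko algebra. -/
def klyRels : Set (MvPolynomial ℤ F) :=
  {x | ∃ i : ℤ, x = MvPolynomial.C (1 + qq) * (MvPolynomial.X i * MvPolynomial.X i) -
    (MvPolynomial.C qq * (MvPolynomial.X i * MvPolynomial.X (i - 1)) +
      MvPolynomial.X i * MvPolynomial.X (i + 1))}

/-- The `q`-Klyachko algebra `𝒦`. -/
abbrev Kly : Type := MvPolynomial ℤ F ⧸ Ideal.span klyRels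

/-- The generator `u_i` of `𝒦`. -/
def uK (i : ℤ) : Kly := Ideal.Quotient.mk (Ideal.span klyRels) (MvPolynomial.X i)

/-- The element `u(λ) = u_{a_1} ⋯ u_{a_m}` of `𝒦`, where `a(λ)` is the area sequence
of `λ ⊆ m × m` (here `a_{i+1} = (i+1) - λ_{m-i}` with `lam` 0-indexed). -/
def uLam (m : ℕ) (lam : ℕ → ℕ) : Kly :=
  ∏ i ∈ Finset.range m, uK ((i : ℤ) + 1 - lam (m - 1 - i))

/-- The partition `λ(G(D))` of a Dyck word of size `N`, 0-indexed:
`λ_{i+1} = N - h_{i+1}(D)`. -/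
def lamG (N : ℕ) (D : List Bool) : ℕ → ℕ :=
  fun i => if i < N then N - northBefore D i else 0

/-- The number of nonzero parts of `λ(G(D))`. -/
def ellG (N : ℕ) (D : List Bool) : ℕ :=
  ((Finset.range N).filter fun i => N - northBefore D i ≠ 0).card

/-- The Dyck graph `G(D)` is abelian. -/
def IsAbelian (N : ℕ) (D : List Bool) : Prop := lamG N D 0 + ellG N D ≤ N

/-- `r` is an acyclic orientation of the graph with adjacency `adj` on `Fin N`. -/
def IsAcyclicOrientation (N : ℕ) (adj : Fin N → Fin N → Prop)
    (r : Fin N → Fin N → Bool) : Prop :=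
  (∀ a b, r a b = true → adj a b) ∧
  (∀ a b, adj a b → (r a b = true ↔ ¬ r b a = true)) ∧
  (∀ a, ¬ Relation.TransGen (fun u v => r u v = true) a a)

/-- Number of ascents of an orientation. -/
def ascOrient (N : ℕ) (r : Fin N → Fin N → Bool) : ℕ :=
  Set.ncard {p : Fin N × Fin N | r p.1 p.2 = true ∧ (p.1 : ℕ) < p.2}

/-- Remove from `S` the sources of the orientation restricted to `S`. -/
def peel (N : ℕ) (r : Fin N → Fin N → Bool) (S : Set (Fin N)) : Set (Fin N) :=
  {v ∈ S | ∃ u ∈ S, r u v = true}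

/-- Number of sources of the orientation restricted to `S`. -/
def numSources (N : ℕ) (r : Fin N → Fin N → Bool) (S : Set (Fin N)) : ℕ :=
  Set.ncard {v ∈ S | ∀ u ∈ S, ¬ r u v = true}

open scoped Classical in
/-- `initial(A)`: the number of leading entries of the source sequence equal to `2`. -/
def initialA (N : ℕ) (r : Fin N → Fin N → Bool) : ℕ :=
  Finset.sup ((Finset.range (N + 1)).filter fun j =>
    ∀ k < j, numSources N r ((peel N r)^[k] Set.univ) = 2) id

end

/-!
Write `⁅𝗇, 𝖾⁆ = 𝗇𝖾 - 𝖾𝗇`. The relation `(1 + q)𝗇𝖾𝗇 = q𝖾𝗇𝗇 + 𝗇𝗇𝖾` says exactly that this commutator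
`q`-commutes with `𝗇`: `𝗇⁅𝗇, 𝖾⁆ = q⁅𝗇, 𝖾⁆𝗇`. By the Leibniz rule, `⁅𝗇^i, 𝖾⁆ = [i]_q⁅𝗇, 𝖾⁆𝗇^(i-1)`,
and since `[i]_q = q[i-1]_q + 1` this is the first identity. The other relation and identity are
the same statements in the opposite algebra, with the roles of `𝗇` and `𝖾` exchanged.
-/

section ModularRelation

open Finset MulOpposite

variable {R A : Type*} [CommRing R] [Ring A] [Algebra R A] {q : R} {x y : A}

theorem mul_lie_eq_smul_lie_mul_iff :
    x * ⁅x, y⁆ = q • (⁅x, y⁆ * x) ↔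
      (1 + q) • (x * y * x) = q • (y * x * x) + x * x * y := by
  have h_sub : (1 + q) • (x * y * x) - (q • (y * x * x) + x * x * y) =
      q • (⁅x, y⁆ * x) - x * ⁅x, y⁆ := by
    simp only [Ring.lie_def, sub_mul, mul_sub, ← mul_assoc]
    module
  rw [eq_comm, ← sub_eq_zero, ← h_sub, sub_eq_zero]

theorem lie_pow_succ_of_mul_lie (h : x * ⁅x, y⁆ = q • (⁅x, y⁆ * x)) (k : ℕ) :
    ⁅x ^ (k + 1), y⁆ = (∑ j ∈ range (k + 1), q ^ j) • (⁅x, y⁆ * x ^ k) := by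
  induction k with
  | zero => simp
  | succ k ih =>
    calc ⁅x ^ (k + 2), y⁆
        = x * ⁅x ^ (k + 1), y⁆ + ⁅x, y⁆ * x ^ (k + 1) := by
          rw [pow_succ' x (k + 1)]
          simp only [Ring.lie_def]
          noncomm_ring
      _ = (∑ j ∈ range (k + 1), q ^ j) • (x * ⁅x, y⁆ * x ^ k) + ⁅x, y⁆ * x ^ (k + 1) := by
          rw [ih, mul_smul_comm, mul_assoc]
      _ = (q * ∑ j ∈ range (k + 1), q ^ j + 1) • (⁅x, y⁆ * x ^ (k + 1)) := by
          rw [h, smul_mul_assoc, mul_assoc, ← pow_succ']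
          module
      _ = (∑ j ∈ range (k + 2), q ^ j) • (⁅x, y⁆ * x ^ (k + 1)) := by
          rw [← geom_sum_succ]

theorem pow_succ_mul_of_modular (h : (1 + q) • (x * y * x) = q • (y * x * x) + x * x * y)
    (k : ℕ) :
    x ^ (k + 1) * y =
      (∑ j ∈ range (k + 1), q ^ j) • (x * y * x ^ k) -
        (q * ∑ j ∈ range k, q ^ j) • (y * x * x ^ k) := by
  calc x ^ (k + 1) * y
      = ⁅x ^ (k + 1), y⁆ + y * x * x ^ k := by
        rw [Ring.lie_def, mul_assoc y, ← pow_succ', sub_add_cancel]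
    _ = (∑ j ∈ range (k + 1), q ^ j) • (⁅x, y⁆ * x ^ k) + y * x * x ^ k := by
        rw [lie_pow_succ_of_mul_lie (mul_lie_eq_smul_lie_mul_iff.mpr h)]
    _ = (∑ j ∈ range (k + 1), q ^ j) • (x * y * x ^ k) -
          (q * ∑ j ∈ range k, q ^ j) • (y * x * x ^ k) := by
        rw [Ring.lie_def, sub_mul, geom_sum_succ]
        module

theorem mul_pow_succ_of_modular (h : (1 + q) • (y * x * y) = q • (y * y * x) + x * y * y)
    (k : ℕ) :
    x * y ^ (k + 1) =
      (∑ j ∈ range (k + 1), q ^ j) • (y ^ k * (x * y)) -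
        (q * ∑ j ∈ range k, q ^ j) • (y ^ k * (y * x)) := by
  have h_op : (1 + q) • (op y * op x * op y) =
      q • (op x * op y * op y) + op y * op y * op x := by
    simpa only [← op_mul, ← op_smul, ← op_add, ← mul_assoc] using congrArg op h
  exact op_injective (pow_succ_mul_of_modular h_op k)

theorem stmt4_general {n e : A}
    (h_nen : (1 + q) • (n * e * n) = q • (e * n * n) + n * n * e)
    (h_ene : (1 + q) • (e * n * e) = q • (e * e * n) + n * e * e)
    (i : ℕ) (hi : 1 ≤ i) :
    (n ^ i * e =
      (∑ j ∈ range i, q ^ j) • (n * e * n ^ (i - 1)) -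
        (q * ∑ j ∈ range (i - 1), q ^ j) • (e * n * n ^ (i - 1))) ∧
    (n * e ^ i =
      (∑ j ∈ range i, q ^ j) • (e ^ (i - 1) * (n * e)) -
        (q * ∑ j ∈ range (i - 1), q ^ j) • (e ^ (i - 1) * (e * n))) := by
  obtain ⟨k, rfl⟩ := Nat.exists_eq_add_of_le' hi
  exact ⟨pow_succ_mul_of_modular h_nen k, mul_pow_succ_of_modular h_ene k⟩

end ModularRelation

theorem Pe_mul_Pn_mul_Pe :
    (1 + qq) • (Pe * Pn * Pe) = qq • (Pe * Pe * Pn) + Pn * Pe * Pe := by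
  simpa only [map_add, map_smul, map_mul, Pn, Pe] using RingQuot.mkAlgHom_rel F PathRel.mod1

theorem Pn_mul_Pe_mul_Pn :
    (1 + qq) • (Pn * Pe * Pn) = qq • (Pe * Pn * Pn) + Pn * Pn * Pe := by
  simpa only [map_add, map_smul, map_mul, Pn, Pe] using RingQuot.mkAlgHom_rel F PathRel.mod2

/-- The two rewriting relations in `𝒫`. -/
theorem stmt4 (i : ℕ) (hi : 1 ≤ i) :
    (Pn ^ i * Pe = qint i • (Pn * Pe * Pn ^ (i - 1)) -
      (qq * qint (i - 1)) • (Pe * Pn * Pn ^ (i - 1))) ∧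
    (Pn * Pe ^ i = qint i • (Pe ^ (i - 1) * (Pn * Pe)) -
      (qq * qint (i - 1)) • (Pe ^ (i - 1) * (Pe * Pn))) :=
  stmt4_general Pn_mul_Pe_mul_Pn Pe_mul_Pn_mul_Pe i hi
end

section
/- Let m ≥ n ≥ 0 and let w be a word with m letters 𝗇 and n letters 𝖾, with partition λ = λ(w), sequence b(λ) = (b_1,…,b_n), and z := #{ i : b_i ≤ 0 }. Then there exist c_0,…,c_n ∈ ℂ(q) such that in the path algebra 𝒫 one has w = Σ_{r=0}^{n} c_r·(𝖾𝗇)^r(𝗇𝖾)^{n−r}𝗇^{m−n}, and for every r the element (−1)^{r+z}·c_r is a Laurent polynomial in q with nonnegative integer coefficients. -/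
/-!
For `𝗇`, `𝖾` satisfying the modular relations, `𝖾𝗇` and `𝗇𝖾` commute, and
`𝗇^(d+1) 𝖾 = ([d+1]_q 𝗇𝖾 - q [d]_q 𝖾𝗇) 𝗇^d`. The relations are invariant under exchanging `𝗇` with
`𝖾` and `q` with `q⁻¹`, which gives the companion formula for `𝖾^(d+1) 𝗇`. Reading a word from left
to right therefore writes it as a product of linear forms in `𝖾𝗇` and `𝗇𝖾`, followed by a power of
one letter. In the variables `-𝖾𝗇` and `𝗇𝖾` a form created by an east step has positive
coefficients, and one created by a north step has negative coefficients. The latter occur once for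
each north step starting below the diagonal, that is, once for each `i` with `b_i ≤ 0`.
-/

section BinaryForms

open scoped Pointwise

lemma pair_pow_subset_of_commute {M : Type*} [Monoid M] {u v : M} (h : Commute u v) (N : ℕ) :
    ({u, v} : Set M) ^ N ⊆ (fun r => u ^ r * v ^ (N - r)) '' Finset.range (N + 1) := by
  induction N with
  | zero => simp
  | succ N ih =>
    rw [pow_succ']
    rintro _ ⟨a, ha, _, hg, rfl⟩
    obtain ⟨r, hr, rfl⟩ := ih hg
    have hrN : r ≤ N := by simpa [Nat.lt_succ_iff] using hr
    rcases ha with rfl | rfl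
    · exact ⟨r + 1, by simpa using hrN, by simp [pow_succ', mul_assoc]⟩
    · refine ⟨r, by simpa using hrN.trans N.le_succ, ?_⟩
      simp only [Nat.succ_sub hrN, pow_succ', ← mul_assoc, (h.symm.pow_right r).eq]

lemma exists_eq_sum_of_mem_span_pair_pow {R A : Type*} [CommSemiring R] [Semiring A]
    [Algebra R A] {u v : A} (h : Commute u v) {N : ℕ} {f : A}
    (hf : f ∈ Submodule.span R {u, v} ^ N) :
    ∃ a : ℕ → R, f = ∑ r ∈ Finset.range (N + 1), a r • (u ^ r * v ^ (N - r)) := by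
  rw [Submodule.span_pow] at hf
  obtain ⟨a, ha⟩ := (Submodule.mem_span_image_finset_iff_exists_fun' R).1
    (Submodule.span_mono (pair_pow_subset_of_commute h N) hf)
  exact ⟨a, ha.symm⟩

end BinaryForms

section LaurentNat

variable {K : Type*} [CommSemiring K] {q : Kˣ}

/-- The values at `q` of Laurent polynomials with nonnegative integer coefficients. -/
noncomputable def laurentNat (q : Kˣ) : Subsemiring K :=
  (LaurentPolynomial.eval₂ (Nat.castRingHom K) q).rangeS

lemma zpow_mem_laurentNat (a : ℤ) : ((q ^ a : Kˣ) : K) ∈ laurentNat q :=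
  ⟨LaurentPolynomial.T a, LaurentPolynomial.eval₂_T _ _ _⟩

lemma exists_eq_zpow_mul_eval₂_of_mem_laurentNat {c : K} (hc : c ∈ laurentNat q) :
    ∃ (a : ℤ) (p : Polynomial ℕ),
      c = ((q ^ a : Kˣ) : K) * p.eval₂ (Nat.castRingHom K) (q : K) := by
  obtain ⟨f, rfl⟩ := hc
  induction f using LaurentPolynomial.induction_on_mul_T with
  | _ p k =>
    refine ⟨-k, p, ?_⟩
    rw [map_mul, LaurentPolynomial.eval₂_toLaurent, LaurentPolynomial.eval₂_T, mul_comm]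

end LaurentNat

section Words

variable {M : Type*} [Monoid M] {x y : M}

/-- The value of a word in `𝗇` (`true`) and `𝖾` (`false`) at `𝗇 = x`, `𝖾 = y`. -/
def wordProd (x y : M) (w : List Bool) : M := (w.map fun b => if b then x else y).prod

lemma wordProd_append_singleton (w : List Bool) (b : Bool) :
    wordProd x y (w ++ [b]) = wordProd x y w * if b then x else y := by
  simp [wordProd]

/-- The power of a single letter left over from a path ending at `(n, m)`, once all
products `xy` and `yx` are split off. -/
def excess (x y : M) (m n : ℕ) : M := x ^ (m - n) * y ^ (n - m)

lemma excess_comm (x y : M) (m n : ℕ) : excess x y m n = excess y x n m := by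
  rcases le_total m n with h | h <;> simp [excess, Nat.sub_eq_zero_of_le h]

lemma excess_mul_right_of_le {m n : ℕ} (hmn : m ≤ n) :
    excess x y m n * y = excess x y m (n + 1) := by
  simp [excess, Nat.sub_eq_zero_of_le hmn, Nat.sub_eq_zero_of_le (hmn.trans n.le_succ),
    Nat.succ_sub hmn, pow_succ]

lemma excess_mul_left_of_le {m n : ℕ} (hnm : n ≤ m) :
    excess x y m n * x = excess x y (m + 1) n := by
  rw [excess_comm x, excess_mul_right_of_le hnm, excess_comm y]

end Words

section ModularPair

variable {K A : Type*} [CommRing K] [Ring A] [Algebra K A] {q : Kˣ} {x y : A}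

/-- The defining relations of the path algebra with parameter `q`, for the elements `x` (in the
role of `𝗇`) and `y` (in the role of `𝖾`) of an arbitrary algebra. -/
structure IsModularPair (q : Kˣ) (x y : A) : Prop where
  east_north_east : (1 + q : K) • (y * x * y) = (q : K) • (y * y * x) + x * y * y
  north_east_north : (1 + q : K) • (x * y * x) = (q : K) • (y * x * x) + x * x * y

/-- The linear form `[d+1]_q xy - q [d]_q yx`. At `x = 𝗇`, `y = 𝖾` it is the weight `wt_{d+1}`;
with `q⁻¹`, `𝖾`, `𝗇` in place of `q`, `𝗇`, `𝖾` it is the weight `wt_{-d}`. -/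
def weight (q : Kˣ) (x y : A) (d : ℕ) : A :=
  (∑ i ∈ Finset.range (d + 1), (q : K) ^ i) • (x * y) -
    (q * ∑ i ∈ Finset.range d, (q : K) ^ i) • (y * x)

namespace IsModularPair

lemma symm (h : IsModularPair q x y) : IsModularPair q⁻¹ y x := by
  have hq (a : A) : (1 + ↑q⁻¹ : K) • a = (↑q⁻¹ : K) • (1 + q : K) • a := by
    rw [smul_smul, mul_add, mul_one, Units.inv_mul, add_comm]
  constructor <;> rw [hq]
  · rw [h.north_east_north, smul_add, smul_smul, Units.inv_mul, one_smul, add_comm]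
  · rw [h.east_north_east, smul_add, smul_smul, Units.inv_mul, one_smul, add_comm]

lemma commute (h : IsModularPair q x y) : Commute (y * x) (x * y) := by
  have h₁ := congrArg (· * x) h.east_north_east
  have h₂ := congrArg (y * ·) h.north_east_north
  simp only [add_mul, mul_add, smul_mul_assoc, mul_smul_comm, mul_assoc] at h₁ h₂
  simpa only [Commute, SemiconjBy, mul_assoc] using (add_left_cancel (h₁.symm.trans h₂)).symm

lemma mul_weight (h : IsModularPair q x y) (d : ℕ) :
    x * weight q x y d = weight q x y (d + 1) * x := by
  have hxxy : x * x * y = (1 + q : K) • (x * y * x) - (q : K) • (y * x * x) :=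
    eq_sub_of_add_eq' h.north_east_north.symm
  simp only [weight, mul_sub, sub_mul, mul_smul_comm, smul_mul_assoc, ← mul_assoc, hxxy,
    Finset.sum_range_succ]
  module

lemma pow_succ_mul (h : IsModularPair q x y) (d : ℕ) :
    x ^ (d + 1) * y = weight q x y d * x ^ d := by
  induction d with
  | zero => simp [weight]
  | succ d ih => rw [pow_succ', mul_assoc, ih, ← mul_assoc, h.mul_weight, mul_assoc, ← pow_succ']

end IsModularPair

/-- The linear forms in `-yx` and `xy` with coefficients in `laurentNat q`. -/
noncomputable def positiveForms (q : Kˣ) (x y : A) : Submodule (laurentNat q) A :=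
  Submodule.span (laurentNat q) {-(y * x), x * y}

lemma smul_add_smul_mem_positiveForms {a b : K} (ha : a ∈ laurentNat q) (hb : b ∈ laurentNat q) :
    a • (x * y) + b • -(y * x) ∈ positiveForms q x y :=
  Submodule.mem_span_pair.2 ⟨⟨b, hb⟩, ⟨a, ha⟩, add_comm _ _⟩

lemma weight_mem_positiveForms (d : ℕ) : weight q x y d ∈ positiveForms q x y := by
  have hq : (q : K) ∈ laurentNat q := by simpa using zpow_mem_laurentNat (q := q) 1
  have hsum (k : ℕ) : ∑ i ∈ Finset.range k, (q : K) ^ i ∈ laurentNat q :=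
    sum_mem fun i _ => pow_mem hq i
  simpa only [weight, smul_neg, ← sub_eq_add_neg] using
    smul_add_smul_mem_positiveForms (x := x) (y := y) (hsum (d + 1)) (mul_mem hq (hsum d))

lemma neg_weight_inv_mem_positiveForms (d : ℕ) : -weight q⁻¹ y x d ∈ positiveForms q x y := by
  have hq : (↑q⁻¹ : K) ∈ laurentNat q := by simpa using zpow_mem_laurentNat (q := q) (-1)
  have hsum (k : ℕ) : ∑ i ∈ Finset.range k, (↑q⁻¹ : K) ^ i ∈ laurentNat q :=
    sum_mem fun i _ => pow_mem hq i
  simpa only [weight, smul_neg, ← sub_eq_add_neg, neg_sub] using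
    smul_add_smul_mem_positiveForms (x := x) (y := y) (mul_mem hq (hsum d)) (hsum (d + 1))

namespace IsModularPair

lemma excess_mul_right_of_lt (h : IsModularPair q x y) {m n : ℕ} (hnm : n < m) :
    excess x y m n * y = weight q x y (m - n - 1) * excess x y m (n + 1) := by
  obtain ⟨d, rfl⟩ := Nat.exists_eq_add_of_lt hnm
  have hsub : n + (d + 1) - (n + 1) = d := by omega
  simpa [excess, add_assoc, hsub] using h.pow_succ_mul d

lemma excess_mul_left_of_lt (h : IsModularPair q x y) {m n : ℕ} (hmn : m < n) :
    excess x y m n * x = weight q⁻¹ y x (n - m - 1) * excess x y (m + 1) n := by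
  rw [excess_comm x, h.symm.excess_mul_right_of_lt hmn, excess_comm y]

end IsModularPair

end ModularPair

section BelowDiagonal

/-- The indices `i` such that the `(i+1)`-st north step of `w` starts strictly below the
diagonal. -/
def belowDiagonal (w : List Bool) : Finset ℕ :=
  (Finset.range (w.count true)).filter fun i => i < eastBefore w i

lemma eastBefore_append_of_lt {w : List Bool} (v : List Bool) {r : ℕ} (h : r < w.count true) :
    eastBefore (w ++ v) r = eastBefore w r := by
  induction w generalizing r with
  | nil => simp at h
  | cons b w ih =>
    cases b
    · simpa [eastBefore] using ih (by simpa using h)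
    · cases r with
      | zero => simp [eastBefore]
      | succ r => simpa [eastBefore] using ih (by simpa using h)

lemma eastBefore_append_true_count (w : List Bool) :
    eastBefore (w ++ [true]) (w.count true) = w.count false := by
  induction w with
  | nil => simp [eastBefore]
  | cons b w ih => cases b <;> simp [eastBefore, ih]

lemma eastBefore_le_count (w : List Bool) (r : ℕ) : eastBefore w r ≤ w.count false := by
  induction w generalizing r with
  | nil => simp [eastBefore]
  | cons b w ih => cases b <;> cases r <;> simp [eastBefore, ih]

lemma eastBefore_monotone (w : List Bool) : Monotone (eastBefore w) := by
  intro r s hrs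
  induction w generalizing r s with
  | nil => simp [eastBefore]
  | cons b w ih =>
    cases b
    · simpa [eastBefore] using ih hrs
    · cases r <;> cases s <;> simp_all [eastBefore]

lemma filter_range_eastBefore_append (w v : List Bool) :
    (Finset.range (w.count true)).filter (fun i => i < eastBefore (w ++ v) i) =
      belowDiagonal w :=
  Finset.filter_congr fun i hi => by rw [eastBefore_append_of_lt v (Finset.mem_range.1 hi)]

lemma belowDiagonal_append_false (w : List Bool) :
    belowDiagonal (w ++ [false]) = belowDiagonal w := by
  rw [← filter_range_eastBefore_append w [false], belowDiagonal]
  simp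

lemma card_belowDiagonal_append_true (w : List Bool) :
    (belowDiagonal (w ++ [true])).card =
      (belowDiagonal w).card + if w.count true < w.count false then 1 else 0 := by
  have hcount : (w ++ [true]).count true = w.count true + 1 := by simp
  rw [belowDiagonal, hcount, Finset.range_add_one, Finset.filter_insert,
    eastBefore_append_true_count, filter_range_eastBefore_append]
  split_ifs
  · exact Finset.card_insert_of_notMem (by simp [belowDiagonal])
  · rfl

lemma wordLam_antitone (m : ℕ) (w : List Bool) : Antitone (wordLam m w) := by
  intro i j hij
  unfold wordLam
  split_ifs
  · exact eastBefore_monotone w (by omega)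
  all_goals omega

lemma wordLam_sub_succ {m i : ℕ} (w : List Bool) (hi : i < m) :
    wordLam m w (m - (i + 1)) = eastBefore w i := by
  rw [wordLam, if_pos (by omega)]
  congr 1
  omega

lemma conjP_le_of_antitone {m i k : ℕ} {lam : ℕ → ℕ} (hlam : Antitone lam) (hk : lam k < i) :
    conjP m lam i ≤ k := by
  have hsub : (Finset.range m).filter (fun r => i ≤ lam r) ⊆ Finset.range k := fun r hr =>
    Finset.mem_range.2 <| not_le.1 fun hkr =>
      ((hlam hkr).trans_lt hk).not_ge (Finset.mem_filter.1 hr).2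
  simpa [conjP] using Finset.card_le_card hsub

lemma bSeq_nonpos_iff {m i : ℕ} {lam : ℕ → ℕ} (hlam : Antitone lam) (hi : i ≤ m) :
    bSeq m lam i ≤ 0 ↔ i ≤ lam (m - i) := by
  unfold bSeq
  split_ifs with h
  · have := conjP_le_of_antitone (m := m) hlam h
    omega
  · omega

lemma card_filter_bSeq_nonpos (w : List Bool) {m n : ℕ} (hm : w.count true = m)
    (hn : w.count false = n) :
    ((Finset.Icc 1 (min m n)).filter fun i => bSeq m (wordLam m w) i ≤ 0).card =
      (belowDiagonal w).card := by
  have hiff {i : ℕ} (hi : i < m) : bSeq m (wordLam m w) (i + 1) ≤ 0 ↔ i < eastBefore w i := by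
    rw [bSeq_nonpos_iff (wordLam_antitone m w) hi, wordLam_sub_succ w hi, Nat.succ_le_iff]
  symm
  refine Finset.card_nbij (· + 1) (fun i hi => ?_) (add_left_injective 1).injOn fun j hj => ?_
  · obtain ⟨him, hib⟩ : i < m ∧ i < eastBefore w i := by simpa [belowDiagonal, hm] using hi
    have hin : i < n := hn ▸ hib.trans_le (eastBefore_le_count w i)
    have hIcc : i + 1 ∈ Finset.Icc 1 (min m n) := by
      simp [him, hin]
    exact Finset.mem_filter.2 ⟨hIcc, (hiff him).2 hib⟩
  · have hj₀ : 0 < j := (Finset.mem_Icc.1 (Finset.mem_filter.1 hj).1).1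
    obtain ⟨i, rfl⟩ := Nat.exists_eq_add_one.2 hj₀
    obtain ⟨⟨him, -⟩, hib⟩ : (i < m ∧ i < n) ∧ bSeq m (wordLam m w) (i + 1) ≤ 0 := by
      simpa [Nat.succ_le_iff] using hj
    exact ⟨i, by simpa [belowDiagonal, hm, him] using (hiff him).1 hib, rfl⟩

end BelowDiagonal

section Expansion

variable {K A : Type*} [CommRing K] [Ring A] [Algebra K A] {q : Kˣ} {x y : A}

namespace IsModularPair

lemma exists_mul_excess_mul_right (h : IsModularPair q x y) {m n : ℕ} {f : A}
    (hf : f ∈ positiveForms q x y ^ min m n) :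
    ∃ g ∈ positiveForms q x y ^ min m (n + 1),
      f * excess x y m n * y = g * excess x y m (n + 1) := by
  rcases lt_or_ge n m with hnm | hmn
  · refine ⟨f * weight q x y (m - n - 1), ?_, ?_⟩
    · rw [show min m (n + 1) = min m n + 1 by omega, pow_succ]
      exact Submodule.mul_mem_mul hf (weight_mem_positiveForms _)
    · rw [mul_assoc, h.excess_mul_right_of_lt hnm, mul_assoc]
  · refine ⟨f, ?_, ?_⟩
    · rwa [show min m (n + 1) = min m n by omega]
    · rw [mul_assoc, excess_mul_right_of_le hmn]

lemma exists_mul_excess_mul_left (h : IsModularPair q x y) {m n : ℕ} {f : A}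
    (hf : f ∈ positiveForms q x y ^ min m n) :
    ∃ g ∈ positiveForms q x y ^ min (m + 1) n,
      f * excess x y m n * x =
        (-1) ^ (if m < n then 1 else 0) * (g * excess x y (m + 1) n) := by
  rcases lt_or_ge m n with hmn | hnm
  · refine ⟨f * -weight q⁻¹ y x (n - m - 1), ?_, ?_⟩
    · rw [show min (m + 1) n = min m n + 1 by omega, pow_succ]
      exact Submodule.mul_mem_mul hf (neg_weight_inv_mem_positiveForms _)
    · rw [if_pos hmn, mul_assoc, h.excess_mul_left_of_lt hmn]
      noncomm_ring
  · refine ⟨f, ?_, ?_⟩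
    · rwa [show min (m + 1) n = min m n by omega]
    · rw [if_neg hnm.not_gt, mul_assoc, excess_mul_left_of_le hnm, pow_zero, one_mul]

lemma exists_wordProd_eq_signed_mul_excess (h : IsModularPair q x y) (w : List Bool) :
    ∃ f ∈ positiveForms q x y ^ min (w.count true) (w.count false),
      wordProd x y w = (-1) ^ (belowDiagonal w).card *
        (f * excess x y (w.count true) (w.count false)) := by
  induction w using List.reverseRecOn with
  | nil =>
    have hone : (1 : A) ∈ (1 : Submodule (laurentNat q) A) := Submodule.one_le.1 le_rfl
    exact ⟨1, by simpa using hone, by simp [wordProd, belowDiagonal, excess]⟩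
  | append_singleton w b ih =>
    obtain ⟨f, hf, hw⟩ := ih
    rw [wordProd_append_singleton, hw, mul_assoc]
    cases b with
    | false =>
      have htrue : (w ++ [false]).count true = w.count true := by simp
      have hfalse : (w ++ [false]).count false = w.count false + 1 := by simp
      obtain ⟨g, hg, hfg⟩ := h.exists_mul_excess_mul_right hf
      rw [htrue, hfalse, belowDiagonal_append_false]
      exact ⟨g, hg, congrArg _ hfg⟩
    | true =>
      have htrue : (w ++ [true]).count true = w.count true + 1 := by simp
      have hfalse : (w ++ [true]).count false = w.count false := by simp
      obtain ⟨g, hg, hfg⟩ := h.exists_mul_excess_mul_left hf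
      rw [htrue, hfalse, card_belowDiagonal_append_true]
      refine ⟨g, hg, ?_⟩
      rw [if_pos rfl, hfg, pow_add, mul_assoc]

lemma exists_eq_sum_of_mem_positiveForms_pow (h : IsModularPair q x y) {N : ℕ} {f : A}
    (hf : f ∈ positiveForms q x y ^ N) :
    ∃ a : ℕ → laurentNat q, f = ∑ r ∈ Finset.range (N + 1),
      ((-1) ^ r * a r : K) • ((y * x) ^ r * (x * y) ^ (N - r)) := by
  obtain ⟨a, rfl⟩ := exists_eq_sum_of_mem_span_pair_pow h.commute.neg_left hf
  refine ⟨a, Finset.sum_congr rfl fun r _ => ?_⟩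
  rw [Subsemiring.smul_def, mul_comm, mul_smul, ← smul_mul_assoc ((-1 : K) ^ r), ← smul_pow,
    neg_one_smul]

end IsModularPair

lemma qq_ne_zero : qq ≠ 0 := RatFunc.X_ne_zero

lemma isModularPair_Pn_Pe : IsModularPair (Units.mk0 qq qq_ne_zero) Pn Pe where
  east_north_east := by
    have := RingQuot.mkAlgHom_rel F PathRel.mod1
    simpa only [Pn, Pe, map_smul, map_add, map_mul, Units.val_mk0] using this
  north_east_north := by
    have := RingQuot.mkAlgHom_rel F PathRel.mod2
    simpa only [Pn, Pe, map_smul, map_add, map_mul, Units.val_mk0] using this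

theorem stmt7_general (h : IsModularPair q x y) {m n : ℕ} (w : List Bool)
    (hm : w.count true = m) (hn : w.count false = n) :
    ∃ c : ℕ → K,
      (wordProd x y w = ∑ r ∈ Finset.range (min m n + 1),
        c r • ((y * x) ^ r * (x * y) ^ (min m n - r) * (x ^ (m - n) * y ^ (n - m)))) ∧
      ∀ r, ∃ (a : ℤ) (p : Polynomial ℕ),
        (-1 : K) ^ (r + ((Finset.Icc 1 (min m n)).filter fun i =>
          bSeq m (wordLam m w) i ≤ 0).card) * c r =
          ((q ^ a : Kˣ) : K) * p.eval₂ (Nat.castRingHom K) (q : K) := by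
  rw [card_filter_bSeq_nonpos w hm hn]
  obtain ⟨f, hf, hw⟩ := h.exists_wordProd_eq_signed_mul_excess w
  rw [hm, hn] at hf hw
  obtain ⟨a, rfl⟩ := h.exists_eq_sum_of_mem_positiveForms_pow hf
  set z := (belowDiagonal w).card
  refine ⟨fun r => (-1) ^ (r + z) * a r, ?_, fun r => ?_⟩
  · rw [hw, Finset.sum_mul, Finset.mul_sum]
    refine Finset.sum_congr rfl fun r _ => ?_
    have hsign : ((-1 : A)) ^ z = algebraMap K A ((-1) ^ z) := by simp
    rw [hsign, ← Algebra.smul_def, smul_mul_assoc, smul_smul, ← mul_assoc, ← pow_add, add_comm z,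
      excess]
  · rw [← mul_assoc, ← mul_pow, neg_one_mul, neg_neg, one_pow, one_mul]
    exact exists_eq_zpow_mul_eval₂_of_mem_laurentNat (a r).2

end Expansion

/-- Expansion in the zigzag basis: globally signed Laurent coefficients. -/
theorem stmt7 (m n : ℕ) (hmn : n ≤ m) (w : List Bool)
    (hn : w.count true = m) (he : w.count false = n) :
    ∃ c : ℕ → F,
      (wordElem w = ∑ r ∈ Finset.range (n + 1),
        c r • ((Pe * Pn) ^ r * (Pn * Pe) ^ (n - r) * Pn ^ (m - n))) ∧
      ∀ r, ∃ (a : ℤ) (p : Polynomial ℕ),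
        (-1 : F) ^ (r + ((Finset.Icc 1 n).filter fun i => bSeq m (wordLam m w) i ≤ 0).card) *
          c r = qq ^ a * Polynomial.eval₂ (Nat.castRingHom F) qq p := by
  simpa [wordElem, wordProd, min_eq_right hmn, Nat.sub_eq_zero_of_le hmn] using
    stmt7_general isModularPair_Pn_Pe w hn he
end
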